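/- arXiv:1801.00884 — 2 statements merged into one kernel-verified Lean document; each statement's English description precedes it below -/
import Mathlib

section
/- Let H be the Bethe–Salpeter matrix, let ω ∈ ℝ, ω ≠ 0, and suppose that iω and −iω are both simple eigenvalues of H (each of algebraic multiplicity one). Then there exists u ∈ ℂ^{2n}, u ≠ 0, such that H·u = −ω·(Π·conj(u)) and H·(Π·conj(u)) = ω·u; moreover u and Π·conj(u) are linearly independent, so that the 2n×2 matrix G = [u, Π·conj(u)] has full column rank, satisfies G·Π₂ = Π·conj(G) (a Π⁺-matrix, where Π₂ = [[0,1],[1,0]]), and H·G = G·[[0, ω],[−ω, 0]]. -/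
open Matrix Complex

noncomputable section

/-- The matrix Π = [[0, I],[I, 0]]. -/
def PiMat (n : ℕ) : Matrix (Fin n ⊕ Fin n) (Fin n ⊕ Fin n) ℂ :=
  Matrix.fromBlocks 0 1 1 0

/-- The matrix Γ₀ = diag(I, −I). -/
def GammaZero (n : ℕ) : Matrix (Fin n ⊕ Fin n) (Fin n ⊕ Fin n) ℂ :=
  Matrix.fromBlocks 1 0 0 (-1)

/-- Entrywise complex conjugate of a matrix. -/
def mconj {α β : Type*} (M : Matrix α β ℂ) : Matrix α β ℂ :=
  M.map (starRingEnd ℂ)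

/-- The Bethe–Salpeter matrix H = [[A, B],[−conj B, −conj A]]. -/
def BSmat {n : ℕ} (A B : Matrix (Fin n) (Fin n) ℂ) :
    Matrix (Fin n ⊕ Fin n) (Fin n ⊕ Fin n) ℂ :=
  Matrix.fromBlocks A B (-(mconj B)) (-(mconj A))

/-- Membership in 𝔾_{2k}: Γ = diag(J, −J) with J diagonal with ±1 entries. -/
def IsGammaMat {k : ℕ} (Γ : Matrix (Fin k ⊕ Fin k) (Fin k ⊕ Fin k) ℂ) : Prop :=
  ∃ d : Fin k → ℂ, (∀ i, d i = 1 ∨ d i = -1) ∧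
    Γ = Matrix.fromBlocks (Matrix.diagonal d) 0 0 (-(Matrix.diagonal d))

/-- G is a Π^ε-matrix (ε = 1 : Π⁺, ε = −1 : Π⁻): G·Π_{2m} = ε·Π_{2n}·conj(G). -/
def IsPiMat {n m : ℕ} (ε : ℂ) (G : Matrix (Fin n ⊕ Fin n) (Fin m ⊕ Fin m) ℂ) : Prop :=
  G * PiMat m = ε • (PiMat n * mconj G)

/-- R is Π^ε-upper triangular. -/
def IsPiUpperTri {n m : ℕ} (ε : ℂ) (R : Matrix (Fin n ⊕ Fin n) (Fin m ⊕ Fin m) ℂ) : Prop :=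
  ∃ R₁ R₂ : Matrix (Fin n) (Fin m) ℂ,
    R = Matrix.fromBlocks R₁ R₂ (ε • mconj R₂) (ε • mconj R₁) ∧
    (∀ (i : Fin n) (j : Fin m), (j : ℕ) < (i : ℕ) → R₁ i j = 0) ∧
    (∀ (i : Fin n) (j : Fin m), (j : ℕ) ≤ (i : ℕ) → R₂ i j = 0)

/-- The i-th Π⁻-leading principal minor of a 2m×2m matrix. -/
def piLeadingMinor {m : ℕ} (M : Matrix (Fin m ⊕ Fin m) (Fin m ⊕ Fin m) ℂ)
    (i : ℕ) (h : i ≤ m) : ℂ :=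
  (Matrix.fromBlocks
    ((M.toBlocks₁₁).submatrix (Fin.castLE h) (Fin.castLE h))
    ((M.toBlocks₁₂).submatrix (Fin.castLE h) (Fin.castLE h))
    ((M.toBlocks₂₁).submatrix (Fin.castLE h) (Fin.castLE h))
    ((M.toBlocks₂₂).submatrix (Fin.castLE h) (Fin.castLE h))).det

/-! The map `K u = Π ū` is a conjugate-linear involution that anticommutes with `H`, so it preserves
the eigenspaces for imaginary eigenvalues. An eigenvector `v` for `iω` can be normalised so that
`K v = -iv`, and an eigenvector `w` for `-iω` so that `K w = iw`. Both then solve `H x = -ω K x`,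
an equation that is only real-linear, and so does `u = v + w`; the eigenvalues being distinct, `u`
and `K u = -iv + iw` are independent. -/

theorem linearIndependent_pair_of_hasEigenvector {R M : Type*} [CommRing R] [IsDomain R]
    [AddCommGroup M] [Module R M] [Module.IsTorsionFree R M] {f : Module.End R M} {μ ν : R}
    (hμν : μ ≠ ν) {v w : M} (hv : f.HasEigenvector μ v) (hw : f.HasEigenvector ν w) :
    LinearIndependent R ![v, w] :=
  have hinj : Function.Injective ![μ, ν] := by
    simp [Function.Injective, Fin.forall_fin_two, hμν, hμν.symm]
  f.eigenvectors_linearIndependent' ![μ, ν] hinj ![v, w] (by simp [Fin.forall_fin_two, hv, hw])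

section Antilinear

open scoped ComplexConjugate

theorem map_mem_eigenspace_neg_conj {R M : Type*} [CommRing R] [StarRing R] [AddCommGroup M]
    [Module R M] {K : M →ₗ⋆[R] M} {H : Module.End R M} (hHK : ∀ v, H (K v) = -K (H v)) {μ : R}
    {v : M} (hv : v ∈ H.eigenspace μ) : K v ∈ H.eigenspace (-conj μ) := by
  rw [Module.End.mem_eigenspace_iff] at hv ⊢
  rw [hHK, hv, map_smulₛₗ, neg_smul]

variable {V : Type*} [AddCommGroup V] [Module ℂ V] {K : V →ₗ⋆[ℂ] V} {H : Module.End ℂ V}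

theorem exists_mem_ne_zero_map_eq_smul (hK : Function.Involutive K) {p : Submodule ℂ V}
    (hp : p ≠ ⊥) (hKp : ∀ v ∈ p, K v ∈ p) {c : ℂ} (hc : c * conj c = 1) :
    ∃ v ∈ p, v ≠ 0 ∧ K v = c • v := by
  obtain ⟨x, hxp, hx⟩ := p.exists_mem_ne_zero_of_ne_bot hp
  by_cases hsum : x + conj c • K x = 0
  · have hKx : K x = -(c • x) := by
      linear_combination (norm := module) c • hsum - hc • K x
    refine ⟨I • x, p.smul_mem I hxp, smul_ne_zero I_ne_zero hx, ?_⟩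
    rw [map_smulₛₗ, hKx, conj_I, neg_smul_neg, smul_comm]
  · refine ⟨x + conj c • K x, p.add_mem hxp (p.smul_mem _ (hKp x hxp)), hsum, ?_⟩
    rw [map_add, map_smulₛₗ, conj_conj, hK x, smul_add, smul_smul, hc, one_smul, add_comm]

theorem exists_hasEigenvector_map_eq_smul (hK : Function.Involutive K)
    (hHK : ∀ v, H (K v) = -K (H v)) {μ : ℂ} (hμ : conj μ = -μ) (hHμ : H.HasEigenvalue μ)
    {c : ℂ} (hc : c * conj c = 1) : ∃ v, H.HasEigenvector μ v ∧ K v = c • v := by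
  have hinv : ∀ v ∈ H.eigenspace μ, K v ∈ H.eigenspace μ := fun v hv ↦ by
    simpa only [hμ, neg_neg] using map_mem_eigenspace_neg_conj hHK hv
  obtain ⟨v, hvμ, hv, hKv⟩ := exists_mem_ne_zero_map_eq_smul hK hHμ hinv hc
  exact ⟨v, ⟨hvμ, hv⟩, hKv⟩

theorem exists_linearIndependent_pair_of_hasEigenvalue (hK : Function.Involutive K)
    (hHK : ∀ v, H (K v) = -K (H v)) {ω : ℝ} (hω : ω ≠ 0)
    (hpos : H.HasEigenvalue (I * ω)) (hneg : H.HasEigenvalue (-(I * ω))) :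
    ∃ u, H u = (-(ω : ℂ)) • K u ∧ H (K u) = (ω : ℂ) • u ∧ LinearIndependent ℂ ![u, K u] := by
  obtain ⟨v, hv, hKv⟩ :=
    exists_hasEigenvector_map_eq_smul hK hHK (by simp) hpos (c := -I) (by simp)
  obtain ⟨w, hw, hKw⟩ :=
    exists_hasEigenvector_map_eq_smul hK hHK (by simp) hneg (c := I) (by simp)
  have hKu : K (v + w) = -I • v + I • w := by rw [map_add, hKv, hKw]
  have hHu : H (v + w) = (-(ω : ℂ)) • K (v + w) := by
    rw [hKu, map_add, hv.apply_eq_smul, hw.apply_eq_smul]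
    module
  have hHKu : H (K (v + w)) = (ω : ℂ) • (v + w) := by
    rw [hHK, hHu, map_smulₛₗ, hK, map_neg, conj_ofReal, neg_smul, neg_neg]
  refine ⟨v + w, hHu, hHKu, ?_⟩
  have hne : I * ω ≠ -(I * ω) := self_ne_neg.mpr (by simp [hω])
  have hvw : LinearIndependent ℂ ![v, w] := linearIndependent_pair_of_hasEigenvector hne hv hw
  have hdet : (1 : ℂ) * I ≠ 1 * -I := by simpa using self_ne_neg.mpr I_ne_zero
  simpa only [hKu, one_smul] using
    (LinearIndependent.pair_add_smul_add_smul_iff 1 1 (-I) I).mpr ⟨hvw, hdet⟩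

end Antilinear

section Mconj

variable {l m o : Type*}

theorem mconj_mconj (M : Matrix l m ℂ) : mconj (mconj M) = M := by
  ext; simp [mconj]

theorem mconj_mul [Fintype m] (M : Matrix l m ℂ) (N : Matrix m o ℂ) :
    mconj (M * N) = mconj M * mconj N :=
  Matrix.map_mul

theorem mconj_fromCols (M : Matrix l m ℂ) (N : Matrix l o ℂ) :
    mconj (fromCols M N) = fromCols (mconj M) (mconj N) :=
  fromCols_map M N (starRingEnd ℂ)

theorem star_mulVec_eq_mconj_mulVec [Fintype m] (M : Matrix l m ℂ) (v : m → ℂ) :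
    star (M *ᵥ v) = mconj M *ᵥ star v :=
  funext (RingHom.map_mulVec (starRingEnd ℂ) M v)

end Mconj

section PiMat

variable {n m : ℕ}

theorem piMat_mul_piMat (n : ℕ) : PiMat n * PiMat n = 1 := by
  simp [PiMat, fromBlocks_multiply, ← fromBlocks_one]

theorem mconj_piMat (n : ℕ) : mconj (PiMat n) = PiMat n := by
  simp [PiMat, mconj, fromBlocks_map, Matrix.map_zero, Matrix.map_one]

theorem bsMat_mul_piMat (A B : Matrix (Fin n) (Fin n) ℂ) :
    BSmat A B * PiMat n = -(PiMat n * mconj (BSmat A B)) := by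
  have hconj : mconj (BSmat A B) = fromBlocks (mconj A) (mconj B) (-B) (-A) := by
    ext (i | i) (j | j) <;> simp [BSmat, mconj]
  rw [hconj]
  simp [BSmat, PiMat, fromBlocks_multiply, fromBlocks_neg]

theorem fromCols_mul_piMat {l : Type*} (U W : Matrix l (Fin m) ℂ) :
    fromCols U W * PiMat m = fromCols W U := by
  simp [PiMat, fromCols_mul_fromBlocks]

theorem isPiMat_one_fromCols (U : Matrix (Fin n ⊕ Fin n) (Fin m) ℂ) :
    IsPiMat 1 (fromCols U (PiMat n * mconj U)) := by
  have hconj : mconj (fromCols U (PiMat n * mconj U)) = fromCols (mconj U) (PiMat n * U) := by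
    rw [mconj_fromCols, mconj_mul, mconj_mconj, mconj_piMat]
  rw [IsPiMat, one_smul, hconj, mul_fromCols, ← Matrix.mul_assoc, piMat_mul_piMat, Matrix.one_mul,
    fromCols_mul_piMat]

/-- The map `K u = Π ū`, the antilinear symmetry of the Bethe–Salpeter matrix, bundled as a
conjugate-linear map; `ū` is the pointwise `star`. -/
def piConj (n : ℕ) : (Fin n ⊕ Fin n → ℂ) →ₗ⋆[ℂ] (Fin n ⊕ Fin n → ℂ) :=
  (PiMat n).mulVecLin.comp (starLinearEquiv ℂ).toLinearMap

theorem piConj_apply (v : Fin n ⊕ Fin n → ℂ) : piConj n v = PiMat n *ᵥ star v :=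
  rfl

theorem piConj_involutive (n : ℕ) : Function.Involutive (piConj n) := fun v ↦ by
  rw [piConj_apply, piConj_apply, star_mulVec_eq_mconj_mulVec, star_star, mconj_piMat,
    mulVec_mulVec, piMat_mul_piMat, one_mulVec]

theorem bsMat_mulVec_piConj (A B : Matrix (Fin n) (Fin n) ℂ) (v : Fin n ⊕ Fin n → ℂ) :
    BSmat A B *ᵥ piConj n v = -piConj n (BSmat A B *ᵥ v) := by
  rw [piConj_apply, piConj_apply, star_mulVec_eq_mconj_mulVec, mulVec_mulVec, mulVec_mulVec,
    bsMat_mul_piMat, neg_mulVec]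

theorem replicateCol_piConj (ι : Type*) (v : Fin n ⊕ Fin n → ℂ) :
    replicateCol ι (piConj n v) = PiMat n * mconj (replicateCol ι v) :=
  replicateCol_mulVec (PiMat n) (star v)

end PiMat

theorem rank_fromCols_replicateCol {R l ι : Type*} [CommRing R] [Nontrivial R] [Unique ι]
    {u w : l → R} (h : LinearIndependent R ![u, w]) :
    (fromCols (replicateCol ι u) (replicateCol ι w)).rank = 2 := by
  have hrange : Set.range (fromCols (replicateCol ι u) (replicateCol ι w)).col =
      Set.range ![u, w] := by
    ext x
    simp [funext_iff, eq_comm, or_comm]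
  rw [rank_eq_finrank_span_cols, hrange, finrank_span_eq_card h, Fintype.card_fin]

theorem mul_fromCols_eq_fromCols_mul_fromBlocks {R l m : Type*} [CommSemiring R] [Fintype l]
    [Fintype m] [DecidableEq m] {H : Matrix l l R} {U W : Matrix l m R} {a b : R}
    (hU : H * U = b • W) (hW : H * W = a • U) :
    H * fromCols U W =
      fromCols U W * fromBlocks 0 (a • (1 : Matrix m m R)) (b • (1 : Matrix m m R)) 0 := by
  rw [mul_fromCols, hU, hW, fromCols_mul_fromBlocks]
  simp

theorem hasEigenvalue_toLin'_of_rootMultiplicity_pos {K l : Type*} [Field K] [Fintype l]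
    [DecidableEq l] {M : Matrix l l K} {μ : K} (h : 0 < M.charpoly.rootMultiplicity μ) :
    Module.End.HasEigenvalue (toLin' M) μ := by
  rw [Module.End.hasEigenvalue_iff_isRoot_charpoly, charpoly_toLin',
    ← Polynomial.rootMultiplicity_pos M.charpoly_monic.ne_zero]
  exact h

theorem stmt10_general (n : ℕ) (A B : Matrix (Fin n) (Fin n) ℂ) (ω : ℝ) (hω : ω ≠ 0)
    (hpos : Module.End.HasEigenvalue (toLin' (BSmat A B)) (I * ω))
    (hneg : Module.End.HasEigenvalue (toLin' (BSmat A B)) (-(I * ω))) :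
    ∃ u : (Fin n ⊕ Fin n) → ℂ, u ≠ 0 ∧
      (BSmat A B).mulVec u = (-(ω : ℂ)) • (PiMat n).mulVec (star u) ∧
      (BSmat A B).mulVec ((PiMat n).mulVec (star u)) = (ω : ℂ) • u ∧
      LinearIndependent ℂ ![u, (PiMat n).mulVec (star u)] ∧
      (let G : Matrix (Fin n ⊕ Fin n) (Fin 1 ⊕ Fin 1) ℂ :=
        Matrix.of fun i j =>
          Sum.elim (fun _ => u i) (fun _ => (PiMat n).mulVec (star u) i) j
       G.rank = 2 ∧
       G * PiMat 1 = PiMat n * mconj G ∧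
       BSmat A B * G =
         G * Matrix.fromBlocks 0 ((ω : ℂ) • (1 : Matrix (Fin 1) (Fin 1) ℂ))
               ((-(ω : ℂ)) • (1 : Matrix (Fin 1) (Fin 1) ℂ)) 0) := by
  obtain ⟨u, hHu, hHKu, hli⟩ := exists_linearIndependent_pair_of_hasEigenvalue
    (piConj_involutive n) (H := toLin' (BSmat A B)) (bsMat_mulVec_piConj A B) hω hpos hneg
  rw [toLin'_apply] at hHu hHKu
  refine ⟨u, hli.ne_zero 0, hHu, hHKu, hli, ?_⟩
  intro G
  have hG : G = fromCols (replicateCol (Fin 1) u) (replicateCol (Fin 1) (piConj n u)) := rfl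
  rw [hG]
  refine ⟨rank_fromCols_replicateCol hli, ?_, mul_fromCols_eq_fromCols_mul_fromBlocks ?_ ?_⟩
  · simpa only [IsPiMat, one_smul, replicateCol_piConj] using
      isPiMat_one_fromCols (replicateCol (Fin 1) u)
  · rw [← replicateCol_mulVec, hHu, replicateCol_smul]
  · rw [← replicateCol_mulVec, hHKu, replicateCol_smul]

/-- if iω and −iω (ω ∈ ℝ, ω ≠ 0) are simple eigenvalues of H, then there
is u ≠ 0 with H·u = −ω·Π·conj(u), H·(Π·conj(u)) = ω·u, u and Π·conj(u) linearly
independent, and G = [u, Π·conj(u)] is a full-column-rank Π⁺-matrix with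
H·G = G·[[0, ω],[−ω, 0]]. -/
theorem stmt10 (n : ℕ) (hn : 0 < n) (A B : Matrix (Fin n) (Fin n) ℂ)
    (hA : Aᴴ = A) (hB : Bᵀ = B)
    (ω : ℝ) (hω : ω ≠ 0)
    (hsimple₁ : (BSmat A B).charpoly.rootMultiplicity (Complex.I * ω) = 1)
    (hsimple₂ : (BSmat A B).charpoly.rootMultiplicity (-(Complex.I * ω)) = 1) :
    ∃ u : (Fin n ⊕ Fin n) → ℂ, u ≠ 0 ∧
      (BSmat A B).mulVec u = (-(ω : ℂ)) • (PiMat n).mulVec (star u) ∧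
      (BSmat A B).mulVec ((PiMat n).mulVec (star u)) = (ω : ℂ) • u ∧
      LinearIndependent ℂ ![u, (PiMat n).mulVec (star u)] ∧
      (let G : Matrix (Fin n ⊕ Fin n) (Fin 1 ⊕ Fin 1) ℂ :=
        Matrix.of fun i j =>
          Sum.elim (fun _ => u i) (fun _ => (PiMat n).mulVec (star u) i) j
       G.rank = 2 ∧
       G * PiMat 1 = PiMat n * mconj G ∧
       BSmat A B * G =
         G * Matrix.fromBlocks 0 ((ω : ℂ) • (1 : Matrix (Fin 1) (Fin 1) ℂ))
               ((-(ω : ℂ)) • (1 : Matrix (Fin 1) (Fin 1) ℂ)) 0) :=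
  stmt10_general n A B ω hω (hasEigenvalue_toLin'_of_rootMultiplicity_pos hsimple₁.ge)
    (hasEigenvalue_toLin'_of_rootMultiplicity_pos hsimple₂.ge)

end
end

section
/- Let H be the Bethe–Salpeter matrix, let q₁, …, q_{k+1} ∈ ℂ^{2n} with n ≥ k+1, set Q_{2k+2} = [q₁, …, q_{k+1}, Π·conj(q₁), …, Π·conj(q_{k+1})] ∈ ℂ^{2n×(2k+2)} and Q_{2k} = [q₁, …, q_k, Π·conj(q₁), …, Π·conj(q_k)], and suppose Q_{2k+2}ᴴ·Γ₀·Q_{2k+2} = Γ_{2k+2} for some Γ_{2k+2} ∈ 𝔾_{2k+2}. Suppose H·Q_{2k} = Q_{2k+2}·T̃_{2k}, where T̃_{2k} ∈ ℂ^{(2k+2)×2k} is in ΓLan form with blocks T₁₁ (tridiagonal), T₂₁ (diagonal), t, and is unreduced, i.e. all subdiagonal entries T̃_{2k}(j+1, j), j = 1, …, k, are nonzero. Then K_{2k+2}(H, q₁) = Q_{2k+2}·R_{2k+2} for some nonsingular Π⁺-upper triangular matrix R_{2k+2} ∈ ℂ^{(2k+2)×(2k+2)}; in particular rank(K_{2k+2}(H,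 q₁)) = 2k+2. -/
open Matrix Complex

noncomputable section

/-- The k-th order Π-Krylov matrix
K_{2k}(H, q) = [q, Hq, …, H^{k−1}q, Π·conj(q), …, Π·conj(H)^{k−1}·conj(q)]. -/
def KrylovMat {n : ℕ} (H : Matrix (Fin n ⊕ Fin n) (Fin n ⊕ Fin n) ℂ)
    (q : (Fin n ⊕ Fin n) → ℂ) (k : ℕ) :
    Matrix (Fin n ⊕ Fin n) (Fin k ⊕ Fin k) ℂ :=
  Matrix.of fun i j =>
    Sum.elim (fun l : Fin k => (H ^ (l : ℕ)).mulVec q i)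
      (fun l : Fin k => (PiMat n).mulVec (((mconj H) ^ (l : ℕ)).mulVec (star q)) i) j

/-- The Π⁺-matrix [q₁, …, q_m, Π·conj(q₁), …, Π·conj(q_m)] built from the columns q. -/
def QfromCols {n m : ℕ} (q : Fin m → (Fin n ⊕ Fin n) → ℂ) :
    Matrix (Fin n ⊕ Fin n) (Fin m ⊕ Fin m) ℂ :=
  Matrix.of fun i j =>
    Sum.elim (fun l : Fin m => q l i)
      (fun l : Fin m => (PiMat n).mulVec (star (q l)) i) j

/-- The (2k+2)×2k matrix in ΓLan form with blocks T₁₁ (tridiagonal), T₂₁ (diagonal)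
and scalar t: rows 1..k are [T₁₁, −conj T₂₁], row k+1 is [t·e_kᵀ, 0], rows k+2..2k+1
are [T₂₁, −conj T₁₁] and row 2k+2 is [0, −conj(t)·e_kᵀ]. -/
def gammaLanForm (k : ℕ) (T11 T21 : Matrix (Fin k) (Fin k) ℂ) (t : ℂ) :
    Matrix (Fin (k + 1) ⊕ Fin (k + 1)) (Fin k ⊕ Fin k) ℂ :=
  Matrix.of fun i j =>
    match i with
    | Sum.inl i' =>
        if h : (i' : ℕ) < k then
          Sum.elim (fun j' => T11 ⟨i', h⟩ j')
            (fun j' => -(starRingEnd ℂ (T21 ⟨i', h⟩ j'))) j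
        else
          Sum.elim (fun j' : Fin k => if (j' : ℕ) + 1 = k then t else 0)
            (fun _ => 0) j
    | Sum.inr i' =>
        if h : (i' : ℕ) < k then
          Sum.elim (fun j' => T21 ⟨i', h⟩ j')
            (fun j' => -(starRingEnd ℂ (T11 ⟨i', h⟩ j'))) j
        else
          Sum.elim (fun _ => 0)
            (fun j' : Fin k => if (j' : ℕ) + 1 = k then -(starRingEnd ℂ t) else 0) j

/-- T₁₁ is tridiagonal. -/
def IsTridiagonal {k : ℕ} (T : Matrix (Fin k) (Fin k) ℂ) : Prop :=
  ∀ i j : Fin k, ((i : ℕ) + 1 < (j : ℕ) ∨ (j : ℕ) + 1 < (i : ℕ)) → T i j = 0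

/-- A skinny ΓQR factorization (for Π⁺-matrices) of G with respect to Γ. -/
def IsSkinnyGammaQR {n m : ℕ} (Γ : Matrix (Fin n ⊕ Fin n) (Fin n ⊕ Fin n) ℂ)
    (G Q : Matrix (Fin n ⊕ Fin n) (Fin m ⊕ Fin m) ℂ)
    (R : Matrix (Fin m ⊕ Fin m) (Fin m ⊕ Fin m) ℂ) : Prop :=
  G = Q * R ∧ IsPiMat 1 Q ∧ IsGammaMat (Qᴴ * Γ * Q) ∧ IsPiUpperTri 1 R

/-
List the columns of `Q` in the interleaved order `q₁, Π·conj(q₁), q₂, Π·conj(q₂), …`. If the last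
nonzero coefficient of a vector belongs to `qⱼ` with `j ≤ k`, then by the decomposition and since
`T̃` is unreduced, applying `H` moves it exactly two places on, to `qⱼ₊₁`. So the coefficient vector
of `Hʲq₁` ends in a nonzero entry at `qⱼ₊₁`. The other Krylov columns are the images of these under
`x ↦ Π·conj(x)`, which commutes with `Q`, so their coefficient vectors end at `Π·conj(qⱼ₊₁)`.
The coefficient matrix is therefore upper triangular in this order, with nonzero diagonal.
-/

section Profile

variable {α β R S : Type*} [Fintype β] [NonUnitalNonAssocSemiring R]
  [Add S] [LinearOrder S] {f : α → S} {g : β → S} {d s : S}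
  {T : Matrix α β R} {x : β → R}

theorem mulVec_apply_eq_zero_of_lt [AddRightMono S] (hT : ∀ a b, g b + d < f a → T a b = 0)
    (hx : ∀ b, s < g b → x b = 0) {a : α} (ha : s + d < f a) : (T *ᵥ x) a = 0 := by
  refine Finset.sum_eq_zero fun b _ => show T a b * x b = 0 from ?_
  rcases lt_or_ge s (g b) with hb | hb
  · rw [hx b hb, mul_zero]
  · rw [hT a b ((add_le_add_left hb d).trans_lt ha), zero_mul]

theorem mulVec_apply_eq_mul_of_injective [AddRightStrictMono S] (hg : Function.Injective g)
    (hT : ∀ a b, g b + d < f a → T a b = 0) {b : β} (hx : ∀ c, g b < g c → x c = 0)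
    {a : α} (ha : f a = g b + d) : (T *ᵥ x) a = T a b * x b := by
  refine Fintype.sum_eq_single b fun c hc => show T a c * x c = 0 from ?_
  rcases (hg.ne hc).lt_or_gt with hlt | hgt
  · rw [hT a c (ha ▸ add_lt_add_left hlt d), zero_mul]
  · rw [hx c hgt, mul_zero]

end Profile

theorem det_of_blockTriangular_of_injective {ι α R : Type*} [Fintype ι] [DecidableEq ι]
    [LinearOrder α] [CommRing R] {M : Matrix ι ι R} {b : ι → α} (hb : Function.Injective b)
    (hM : M.BlockTriangular b) : M.det = ∏ i, M i i := by
  let _ : LinearOrder ι := LinearOrder.lift' b hb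
  convert det_of_isUpperTriangular (M := M) fun i j hij => hM hij

theorem rank_eq_card_of_isUnit_mul {ι κ R : Type*} [Fintype ι] [Fintype κ] [DecidableEq κ]
    [CommSemiring R] [StrongRankCondition R] {M : Matrix κ ι R} {N : Matrix ι κ R}
    (h : IsUnit (M * N)) : N.rank = Fintype.card κ :=
  le_antisymm (rank_le_card_width N) (rank_of_isUnit _ h ▸ rank_mul_le_right M N)

section PiStructure

variable {n m k : ℕ} {ε : ℂ}

theorem IsGammaMat.mul_self {Γ : Matrix (Fin k ⊕ Fin k) (Fin k ⊕ Fin k) ℂ}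
    (hΓ : IsGammaMat Γ) : Γ * Γ = 1 := by
  obtain ⟨d, hd, rfl⟩ := hΓ
  have hdd : ∀ i, d i * d i = 1 := fun i => mul_self_eq_one_iff.2 (hd i)
  simp only [fromBlocks_multiply, diagonal_mul_diagonal, neg_mul_neg, mul_zero, zero_mul, add_zero,
    zero_add, hdd, diagonal_one, fromBlocks_one]

theorem IsGammaMat.isUnit {Γ : Matrix (Fin k ⊕ Fin k) (Fin k ⊕ Fin k) ℂ}
    (hΓ : IsGammaMat Γ) : IsUnit Γ :=
  .of_mul_eq_one Γ hΓ.mul_self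

theorem rank_eq_two_mul_of_isGammaMat_mul {ι : Type*} [Fintype ι]
    {M : Matrix (Fin k ⊕ Fin k) ι ℂ} {N : Matrix ι (Fin k ⊕ Fin k) ℂ}
    (hMN : IsGammaMat (M * N)) : N.rank = 2 * k := by
  rw [rank_eq_card_of_isUnit_mul hMN.isUnit, Fintype.card_sum, Fintype.card_fin, two_mul]

theorem mconj_mulVec_star {α β : Type*} [Fintype β] (M : Matrix α β ℂ) (v : β → ℂ) :
    mconj M *ᵥ star v = star (M *ᵥ v) := by
  rw [star_mulVec, ← mulVec_transpose]
  rfl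

theorem mconj_pow {α : Type*} [Fintype α] [DecidableEq α] (M : Matrix α α ℂ) (l : ℕ) :
    mconj M ^ l = mconj (M ^ l) :=
  (map_pow (starRingEnd ℂ).mapMatrix M l).symm

theorem PiMat_mulVec (v : Fin n ⊕ Fin n → ℂ) : PiMat n *ᵥ v = v ∘ Sum.swap := by
  ext (i | i) <;> simp [PiMat, fromBlocks_mulVec]

theorem IsPiMat.mulVec_star {G : Matrix (Fin n ⊕ Fin n) (Fin m ⊕ Fin m) ℂ}
    (hG : IsPiMat ε G) (x : Fin m ⊕ Fin m → ℂ) :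
    G *ᵥ (PiMat m *ᵥ star x) = ε • (PiMat n *ᵥ star (G *ᵥ x)) := by
  rw [mulVec_mulVec, hG, smul_mulVec, ← mulVec_mulVec, mconj_mulVec_star]

theorem isPiMat_QfromCols (q : Fin m → Fin n ⊕ Fin n → ℂ) : IsPiMat 1 (QfromCols q) := by
  ext i j
  rcases i with i | i <;> rcases j with j | j <;> simp only [QfromCols, PiMat_mulVec] <;>
    simp [PiMat, mconj, mul_apply, one_apply]

theorem IsPiMat.mul_QfromCols {G : Matrix (Fin n ⊕ Fin n) (Fin m ⊕ Fin m) ℂ}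
    (hG : IsPiMat 1 G) (c : Fin k → Fin m ⊕ Fin m → ℂ) :
    G * QfromCols c = QfromCols fun l => G *ᵥ c l := by
  ext i (l | l)
  · rfl
  · have hcol := hG.mulVec_star (c l)
    rw [one_smul] at hcol
    exact congrFun hcol i

theorem KrylovMat_eq_QfromCols (H : Matrix (Fin n ⊕ Fin n) (Fin n ⊕ Fin n) ℂ)
    (q : Fin n ⊕ Fin n → ℂ) (k : ℕ) :
    KrylovMat H q k = QfromCols fun l : Fin k => H ^ (l : ℕ) *ᵥ q := by
  simp only [KrylovMat, QfromCols, mconj_pow, mconj_mulVec_star]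

end PiStructure

section Interleave

variable {n m k : ℕ} {ε : ℂ}

/-- The position of an index of `Fin m ⊕ Fin m` in the interleaved order
`inl 0, inr 0, inl 1, inr 1, …`, in which Π-upper triangular matrices become upper triangular. -/
def interleave : Fin m ⊕ Fin m → ℕ :=
  Sum.elim (fun i => 2 * i) (fun i => 2 * i + 1)

theorem interleave_injective : Function.Injective (interleave (m := m)) := by
  rintro (a | a) (b | b) h <;> simp only [interleave, Sum.elim_inl, Sum.elim_inr] at h
  · exact congrArg Sum.inl (Fin.ext (by omega))
  · omega
  · omega
  · exact congrArg Sum.inr (Fin.ext (by omega))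

theorem interleave_map_castSucc (b : Fin k ⊕ Fin k) :
    interleave (b.map Fin.castSucc Fin.castSucc) = interleave b := by
  cases b <;> rfl

theorem isPiUpperTri_QfromCols {c : Fin m → Fin n ⊕ Fin n → ℂ}
    (hc : ∀ (j : Fin m) a, 2 * (j : ℕ) < interleave a → c j a = 0) :
    IsPiUpperTri 1 (QfromCols c) := by
  refine ⟨of fun i j => c j (.inl i), of fun i j => star (c j (.inr i)), ?_, ?_, ?_⟩
  · ext (i | i) (j | j) <;> simp [QfromCols, PiMat_mulVec, mconj]
  · exact fun i j hij => hc j (.inl i) (Nat.mul_lt_mul_of_pos_left hij two_pos)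
  · intro i j hij
    rw [of_apply, hc j (.inr i) (by simp only [interleave, Sum.elim_inr]; omega), star_zero]

theorem IsPiUpperTri.blockTriangular {R : Matrix (Fin m ⊕ Fin m) (Fin m ⊕ Fin m) ℂ}
    (hR : IsPiUpperTri ε R) : R.BlockTriangular interleave := by
  obtain ⟨R₁, R₂, rfl, hR₁, hR₂⟩ := hR
  rintro (i | i) (j | j) hij <;>
    simp only [interleave, Sum.elim_inl, Sum.elim_inr] at hij
  · exact hR₁ i j (by omega)
  · exact hR₂ i j (by omega)
  · simp [mconj, hR₂ i j (by omega)]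
  · simp [mconj, hR₁ i j (by omega)]

theorem IsPiUpperTri.isUnit_det {R : Matrix (Fin m ⊕ Fin m) (Fin m ⊕ Fin m) ℂ}
    (hR : IsPiUpperTri ε R) (hε : ε ≠ 0) (hdiag : ∀ i, R (.inl i) (.inl i) ≠ 0) :
    IsUnit R.det := by
  rw [det_of_blockTriangular_of_injective interleave_injective hR.blockTriangular,
    isUnit_iff_ne_zero, Finset.prod_ne_zero_iff]
  obtain ⟨R₁, R₂, rfl, -, -⟩ := hR
  rintro (i | i) -
  · exact hdiag i
  · simpa [mconj, hε] using hdiag i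

/-- Π-Hessenberg matrices, to Π-upper triangular ones what upper Hessenberg matrices are to upper
triangular ones. The subdiagonal of the upper left block lies two places below the diagonal of the
interleaved order, hence the `2`; no relation between the left and right halves is imposed. -/
def IsPiHessenberg (T : Matrix (Fin m ⊕ Fin m) (Fin k ⊕ Fin k) ℂ) : Prop :=
  ∀ a b, interleave b + 2 < interleave a → T a b = 0

theorem isPiHessenberg_gammaLanForm {T11 T21 : Matrix (Fin k) (Fin k) ℂ} {t : ℂ}
    (hT11 : IsTridiagonal T11) (hT21 : T21.IsDiag) :
    IsPiHessenberg (gammaLanForm k T11 T21 t) := by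
  have hT11' (i j : Fin k) (h : (j : ℕ) + 1 < i) : T11 i j = 0 := hT11 i j (.inr h)
  have hT21' (i j : Fin k) (h : (j : ℕ) < i) : T21 i j = 0 := hT21 (Fin.ne_of_gt h)
  rintro (i | i) (j | j) hij <;>
    simp only [interleave, Sum.elim_inl, Sum.elim_inr] at hij <;>
    simp only [gammaLanForm, of_apply, Sum.elim_inl, Sum.elim_inr] <;>
    split_ifs with hi <;> try first | rfl | omega
  · exact hT11' _ _ (by simp only; omega)
  · rw [hT21' _ _ (by simp only; omega), map_zero, neg_zero]
  · exact hT21' _ _ (by simp only; omega)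
  · rw [hT11' _ _ (by simp only; omega), map_zero, neg_zero]

end Interleave

section Krylov

variable {n k : ℕ} {q : Fin (k + 1) → Fin n ⊕ Fin n → ℂ}

theorem QfromCols_castSucc_mulVec {x : Fin (k + 1) ⊕ Fin (k + 1) → ℂ}
    (hx : ∀ b, 2 * k ≤ interleave b → x b = 0) :
    QfromCols (q ∘ Fin.castSucc) *ᵥ (x ∘ Sum.map Fin.castSucc Fin.castSucc) =
      QfromCols q *ᵥ x := by
  have hinl : x (.inl (Fin.last k)) = 0 := hx _ le_rfl
  have hinr : x (.inr (Fin.last k)) = 0 := hx _ (Nat.le_succ _)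
  ext i
  simp [mulVec, dotProduct, Fin.sum_univ_castSucc, hinl, hinr, QfromCols]

variable {H : Matrix (Fin n ⊕ Fin n) (Fin n ⊕ Fin n) ℂ}
  {T : Matrix (Fin (k + 1) ⊕ Fin (k + 1)) (Fin k ⊕ Fin k) ℂ}

theorem exists_krylov_coeff (hT : IsPiHessenberg T)
    (hunred : ∀ j : Fin k, T (.inl j.succ) (.inl j) ≠ 0)
    (hdec : H * QfromCols (q ∘ Fin.castSucc) = QfromCols q * T) (j : Fin (k + 1)) :
    ∃ x : Fin (k + 1) ⊕ Fin (k + 1) → ℂ, (∀ b, 2 * (j : ℕ) < interleave b → x b = 0) ∧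
      x (.inl j) ≠ 0 ∧ H ^ (j : ℕ) *ᵥ q 0 = QfromCols q *ᵥ x := by
  induction j using Fin.induction with
  | zero =>
    refine ⟨Pi.single (.inl 0) 1, fun b hb => ?_, by simp, ?_⟩
    · exact Pi.single_eq_of_ne (by rintro rfl; exact hb.false) _
    · ext i
      simp [QfromCols]
  | succ j ih =>
    obtain ⟨x, hx, hxj, hHx⟩ := ih
    let y := x ∘ Sum.map Fin.castSucc Fin.castSucc
    have hy : ∀ b, 2 * (j : ℕ) < interleave b → y b = 0 := fun b hb =>
      hx _ (by rwa [interleave_map_castSucc])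
    have hQy : QfromCols (q ∘ Fin.castSucc) *ᵥ y = QfromCols q *ᵥ x :=
      QfromCols_castSucc_mulVec fun b hb => hx b (by simp only [Fin.val_castSucc]; omega)
    refine ⟨T *ᵥ y, fun b => mulVec_apply_eq_zero_of_lt hT hy, ?_, ?_⟩
    · rw [mulVec_apply_eq_mul_of_injective interleave_injective hT (b := .inl j) hy rfl]
      exact mul_ne_zero (hunred j) hxj
    · calc H ^ (j.succ : ℕ) *ᵥ q 0
        _ = H *ᵥ (H ^ (j : ℕ) *ᵥ q 0) := by rw [Fin.val_succ, pow_succ', mulVec_mulVec]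
        _ = H *ᵥ (QfromCols (q ∘ Fin.castSucc) *ᵥ y) := by rw [hQy, ← hHx, Fin.val_castSucc]
        _ = QfromCols q *ᵥ (T *ᵥ y) := by rw [mulVec_mulVec, hdec, mulVec_mulVec]

theorem stmt14_general (hT : IsPiHessenberg T)
    (hunred : ∀ j : Fin k, T (.inl j.succ) (.inl j) ≠ 0)
    (hdec : H * QfromCols (q ∘ Fin.castSucc) = QfromCols q * T) :
    ∃ R : Matrix (Fin (k + 1) ⊕ Fin (k + 1)) (Fin (k + 1) ⊕ Fin (k + 1)) ℂ,
      IsPiUpperTri 1 R ∧ IsUnit R.det ∧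
      KrylovMat H (q 0) (k + 1) = QfromCols q * R ∧
      (KrylovMat H (q 0) (k + 1)).rank = (QfromCols q).rank := by
  choose c hsupp hlead hkrylov using exists_krylov_coeff hT hunred hdec
  have hR : IsPiUpperTri 1 (QfromCols c) := isPiUpperTri_QfromCols hsupp
  have hdet : IsUnit (QfromCols c).det := hR.isUnit_det one_ne_zero hlead
  have hK : KrylovMat H (q 0) (k + 1) = QfromCols q * QfromCols c := by
    rw [(isPiMat_QfromCols q).mul_QfromCols, KrylovMat_eq_QfromCols]
    simp only [hkrylov]
  exact ⟨_, hR, hdet, hK, by rw [hK, rank_mul_eq_left_of_isUnit_det _ _ hdet]⟩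

end Krylov

/-- from an unreduced ΓLan decomposition H·Q_{2k} = Q_{2k+2}·T̃_{2k} one
recovers a nonsingular Π⁺-upper triangular R with K_{2k+2}(H, q₁) = Q_{2k+2}·R; in
particular K_{2k+2}(H, q₁) has full column rank 2k+2. -/
theorem stmt14 (n k : ℕ) (hk : 1 ≤ k) (hn : k + 1 ≤ n)
    (A B : Matrix (Fin n) (Fin n) ℂ) (hA : Aᴴ = A) (hB : Bᵀ = B)
    (q : Fin (k + 1) → (Fin n ⊕ Fin n) → ℂ)
    (hGam : IsGammaMat ((QfromCols q)ᴴ * GammaZero n * QfromCols q))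
    (T11 T21 : Matrix (Fin k) (Fin k) ℂ) (t : ℂ)
    (hT11 : IsTridiagonal T11) (hT21 : T21.IsDiag)
    (hunred : ∀ j : Fin k,
      gammaLanForm k T11 T21 t (Sum.inl j.succ) (Sum.inl j) ≠ 0)
    (hdec : BSmat A B * QfromCols (q ∘ Fin.castSucc) =
      QfromCols q * gammaLanForm k T11 T21 t) :
    ∃ R : Matrix (Fin (k + 1) ⊕ Fin (k + 1)) (Fin (k + 1) ⊕ Fin (k + 1)) ℂ,
      IsPiUpperTri 1 R ∧ IsUnit R.det ∧
      KrylovMat (BSmat A B) (q 0) (k + 1) = QfromCols q * R ∧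
      (KrylovMat (BSmat A B) (q 0) (k + 1)).rank = 2 * (k + 1) := by
  exact rank_eq_two_mul_of_isGammaMat_mul hGam ▸
    stmt14_general (isPiHessenberg_gammaLanForm hT11 hT21) hunred hdec

end
end
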